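/- Let Q be a skew symmetric core of order q, and let X and Y be n×n real matrices with all entries ±1 such that X Y^T = Y X^T and X X^T + q·Y Y^T = n(q+1) I_n. Define recursively 𝒳_0 = X, 𝒴_0 = Y, and for m ≥ 1, 𝒳_m = J_q ⊗ 𝒴_{m−1} and 𝒴_m = I_q ⊗ 𝒳_{m−1} + Q ⊗ 𝒴_{m−1}. Then for every integer m ≥ 0, 𝒳_m 𝒴_m^T = 𝒴_m 𝒳_m^T and 𝒳_m 𝒳_m^T + q·𝒴_m 𝒴_m^T = n·q^m·(q+1)·I_{n q^m}. -/

import Mathlib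

/-!
The pair of identities `A Bᵀ = B Aᵀ` and `A Aᵀ + q B Bᵀ = c I` is carried, with `c` replaced by
`q c`, through one step `A₁ = J ⊗ B`, `B₁ = I ⊗ A + Q ⊗ B` of the recursion (`IsAmicablePair.step`).
Indeed `J Qᵀ = Q J = 0` gives `A₁ B₁ᵀ = J ⊗ B Aᵀ` and `B₁ A₁ᵀ = J ⊗ A Bᵀ`. Moreover
`A₁ A₁ᵀ = q J ⊗ B Bᵀ`, while in `B₁ B₁ᵀ` the cross terms `Qᵀ ⊗ A Bᵀ + Q ⊗ B Aᵀ` cancel because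
`Qᵀ = -Q`, leaving `B₁ B₁ᵀ = I ⊗ (A Aᵀ + q B Bᵀ) - J ⊗ B Bᵀ = c I - J ⊗ B Bᵀ`; the `J ⊗ B Bᵀ` terms
then cancel in `A₁ A₁ᵀ + q B₁ B₁ᵀ`. The identities are also invariant under relabelling the index
set (`IsAmicablePair.reindex`), so the theorem follows by induction on `m`, starting from
`c = n (q + 1)`.
-/

open Matrix Kronecker

/-- The `q × q` all-ones matrix. -/
def Jmat (q : ℕ) : Matrix (Fin q) (Fin q) ℝ := Matrix.of fun _ _ => 1

/-- `Q` is a skew symmetric core of order `q`: a `q × q` real matrix with zero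
diagonal and off-diagonal entries `±1` such that `Qᵀ = -Q`, `Q J = J Q = 0` and
`Q Qᵀ = q I - J`. -/
def IsSkewCore (q : ℕ) (Q : Matrix (Fin q) (Fin q) ℝ) : Prop :=
  (∀ i, Q i i = 0) ∧
  (∀ i j, i ≠ j → Q i j = 1 ∨ Q i j = -1) ∧
  Qᵀ = -Q ∧
  Q * Jmat q = 0 ∧
  Jmat q * Q = 0 ∧
  Q * Qᵀ = (q : ℝ) • (1 : Matrix (Fin q) (Fin q) ℝ) - Jmat q

/-- Index identification `Fin q × Fin (q ^ m) ≃ Fin (q ^ (m + 1))`. -/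
def finPowEquiv (q m : ℕ) : Fin q × Fin (q ^ m) ≃ Fin (q ^ (m + 1)) :=
  finProdFinEquiv.trans (finCongr (by ring))

/-- The recursively defined pair `(𝒥_m, 𝒜_m)`:
`𝒥_0 = 𝒜_0 = J_1`, `𝒥_m = J_q ⊗ 𝒜_{m-1}`, `𝒜_m = I_q ⊗ 𝒥_{m-1} + Q ⊗ 𝒜_{m-1}`. -/
def JArec (q : ℕ) (Q : Matrix (Fin q) (Fin q) ℝ) :
    (m : ℕ) → Matrix (Fin (q ^ m)) (Fin (q ^ m)) ℝ × Matrix (Fin (q ^ m)) (Fin (q ^ m)) ℝ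
  | 0 => (Matrix.of fun _ _ => 1, Matrix.of fun _ _ => 1)
  | m + 1 =>
    (Matrix.reindex (finPowEquiv q m) (finPowEquiv q m) (Jmat q ⊗ₖ (JArec q Q m).2),
     Matrix.reindex (finPowEquiv q m) (finPowEquiv q m)
       ((1 : Matrix (Fin q) (Fin q) ℝ) ⊗ₖ (JArec q Q m).1 + Q ⊗ₖ (JArec q Q m).2))

/-- `𝒥_m`. -/
def Jm (q : ℕ) (Q : Matrix (Fin q) (Fin q) ℝ) (m : ℕ) :
    Matrix (Fin (q ^ m)) (Fin (q ^ m)) ℝ := (JArec q Q m).1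

/-- `𝒜_m`. -/
def Am (q : ℕ) (Q : Matrix (Fin q) (Fin q) ℝ) (m : ℕ) :
    Matrix (Fin (q ^ m)) (Fin (q ^ m)) ℝ := (JArec q Q m).2

/-- Index identification `Fin q × Fin (q ^ m * n) ≃ Fin (q ^ (m + 1) * n)`. -/
def finPowMulEquiv (q n m : ℕ) : Fin q × Fin (q ^ m * n) ≃ Fin (q ^ (m + 1) * n) :=
  finProdFinEquiv.trans (finCongr (by ring))

/-- The recursively defined pair `(𝒳_m, 𝒴_m)`:
`𝒳_0 = X`, `𝒴_0 = Y`, `𝒳_m = J_q ⊗ 𝒴_{m-1}`, `𝒴_m = I_q ⊗ 𝒳_{m-1} + Q ⊗ 𝒴_{m-1}`. -/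
def XYrec (q n : ℕ) (Q : Matrix (Fin q) (Fin q) ℝ) (X Y : Matrix (Fin n) (Fin n) ℝ) :
    (m : ℕ) →
      Matrix (Fin (q ^ m * n)) (Fin (q ^ m * n)) ℝ ×
        Matrix (Fin (q ^ m * n)) (Fin (q ^ m * n)) ℝ
  | 0 => (Matrix.reindex (finCongr (by simp)) (finCongr (by simp)) X,
      Matrix.reindex (finCongr (by simp)) (finCongr (by simp)) Y)
  | m + 1 =>
    (Matrix.reindex (finPowMulEquiv q n m) (finPowMulEquiv q n m)
        (Jmat q ⊗ₖ (XYrec q n Q X Y m).2),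
     Matrix.reindex (finPowMulEquiv q n m) (finPowMulEquiv q n m)
       ((1 : Matrix (Fin q) (Fin q) ℝ) ⊗ₖ (XYrec q n Q X Y m).1 +
          Q ⊗ₖ (XYrec q n Q X Y m).2))

/-- Matrices `A`, `B` are amicable, `A Bᵀ = B Aᵀ`, and satisfy `A Aᵀ + q B Bᵀ = c I`. -/
def IsAmicablePair {ι : Type*} [Fintype ι] [DecidableEq ι] (q c : ℝ) (A B : Matrix ι ι ℝ) :
    Prop :=
  A * Bᵀ = B * Aᵀ ∧ A * Aᵀ + q • (B * Bᵀ) = c • (1 : Matrix ι ι ℝ)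

theorem IsAmicablePair.reindex {ι κ : Type*} [Fintype ι] [DecidableEq ι] [Fintype κ]
    [DecidableEq κ] {q c : ℝ} {A B : Matrix ι ι ℝ} (h : IsAmicablePair q c A B) (e : ι ≃ κ) :
    IsAmicablePair q c (Matrix.reindex e e A) (Matrix.reindex e e B) := by
  have mul_reindex (M N : Matrix ι ι ℝ) :
      Matrix.reindex e e M * (Matrix.reindex e e N)ᵀ = Matrix.reindex e e (M * Nᵀ) := by
    simp [Matrix.submatrix_mul_equiv]
  refine ⟨by rw [mul_reindex, mul_reindex, h.1], ?_⟩
  have := congrArg (Matrix.reindex e e) h.2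
  rw [mul_reindex, mul_reindex]
  simpa [Matrix.submatrix_add, Matrix.submatrix_smul] using this

theorem Jmat_transpose (q : ℕ) : (Jmat q)ᵀ = Jmat q := rfl

theorem Jmat_mul_self (q : ℕ) : Jmat q * Jmat q = (q : ℝ) • Jmat q := by
  ext i j
  simp [Jmat, Matrix.mul_apply]

/-- One step of the recursion preserves amicability and multiplies the constant by `q`. -/
theorem IsAmicablePair.step {ι : Type*} [Fintype ι] [DecidableEq ι] {q : ℕ}
    {Q : Matrix (Fin q) (Fin q) ℝ} (hQ : IsSkewCore q Q) {c : ℝ} {A B : Matrix ι ι ℝ}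
    (h : IsAmicablePair q c A B) :
    IsAmicablePair q (q * c) (Jmat q ⊗ₖ B)
      ((1 : Matrix (Fin q) (Fin q) ℝ) ⊗ₖ A + Q ⊗ₖ B) := by
  obtain ⟨-, -, hT, hQJ, hJQ, hQQ⟩ := hQ
  obtain ⟨hAB, hsum⟩ := h
  have hJQT : Jmat q * Qᵀ = 0 := by rw [hT, Matrix.mul_neg, hJQ, neg_zero]
  have hBB : ((1 : Matrix (Fin q) (Fin q) ℝ) ⊗ₖ A + Q ⊗ₖ B) *
      ((1 : Matrix (Fin q) (Fin q) ℝ) ⊗ₖ A + Q ⊗ₖ B)ᵀ =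
      c • 1 - Jmat q ⊗ₖ (B * Bᵀ) := by
    have expand : ((1 : Matrix (Fin q) (Fin q) ℝ) ⊗ₖ A + Q ⊗ₖ B) *
        ((1 : Matrix (Fin q) (Fin q) ℝ) ⊗ₖ A + Q ⊗ₖ B)ᵀ =
        (1 : Matrix (Fin q) (Fin q) ℝ) ⊗ₖ (A * Aᵀ) + Qᵀ ⊗ₖ (A * Bᵀ) +
          (Q ⊗ₖ (B * Aᵀ) + (Q * Qᵀ) ⊗ₖ (B * Bᵀ)) := by
      simp only [Matrix.transpose_add, ← kroneckerMap_transpose, Matrix.transpose_one,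
        Matrix.add_mul, Matrix.mul_add, ← Matrix.mul_kronecker_mul, Matrix.one_mul,
        Matrix.mul_one]
      abel
    have hone : (1 : Matrix (Fin q) (Fin q) ℝ) ⊗ₖ (A * Aᵀ + (q : ℝ) • (B * Bᵀ)) =
        c • 1 := by
      rw [hsum, Matrix.kronecker_smul, Matrix.one_kronecker_one]
    -- the cross terms become `-Q ⊗ B Aᵀ` and `Q ⊗ B Aᵀ`
    rw [expand, ← hone, hQQ, hT, hAB]
    ext i j
    simp only [Matrix.add_apply, Matrix.sub_apply, Matrix.neg_apply, Matrix.smul_apply,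
      Matrix.kroneckerMap_apply, smul_eq_mul]
    ring
  constructor
  · simp only [Matrix.transpose_add, ← kroneckerMap_transpose, Matrix.transpose_one,
      Matrix.add_mul, Matrix.mul_add, ← Matrix.mul_kronecker_mul, Matrix.one_mul,
      Matrix.mul_one, Jmat_transpose, hJQT, hQJ, Matrix.zero_kronecker, hAB]
  · rw [hBB, ← kroneckerMap_transpose, ← Matrix.mul_kronecker_mul, Jmat_transpose,
      Jmat_mul_self, Matrix.smul_kronecker, smul_sub, smul_smul]
    abel

/-- let `Q` be a skew symmetric core of order `q` and `X, Y` amicable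
`n × n` `(±1)`-matrices with `X Xᵀ + q·Y Yᵀ = n(q+1) I`. Then for every `m ≥ 0`,
`𝒳_m 𝒴_mᵀ = 𝒴_m 𝒳_mᵀ` and `𝒳_m 𝒳_mᵀ + q·𝒴_m 𝒴_mᵀ = n·q^m·(q+1)·I`. -/
theorem stmt_8 (q n : ℕ) (Q : Matrix (Fin q) (Fin q) ℝ) (hQ : IsSkewCore q Q)
    (X Y : Matrix (Fin n) (Fin n) ℝ)
    (hX : ∀ i j, X i j = 1 ∨ X i j = -1)
    (hY : ∀ i j, Y i j = 1 ∨ Y i j = -1)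
    (hamic : X * Yᵀ = Y * Xᵀ)
    (hsum : X * Xᵀ + (q : ℝ) • (Y * Yᵀ) =
        ((n : ℝ) * ((q : ℝ) + 1)) • (1 : Matrix (Fin n) (Fin n) ℝ))
    (m : ℕ) :
    (XYrec q n Q X Y m).1 * ((XYrec q n Q X Y m).2)ᵀ =
        (XYrec q n Q X Y m).2 * ((XYrec q n Q X Y m).1)ᵀ ∧
      (XYrec q n Q X Y m).1 * ((XYrec q n Q X Y m).1)ᵀ +
          (q : ℝ) • ((XYrec q n Q X Y m).2 * ((XYrec q n Q X Y m).2)ᵀ) =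
        ((n : ℝ) * (q : ℝ) ^ m * ((q : ℝ) + 1)) •
          (1 : Matrix (Fin (q ^ m * n)) (Fin (q ^ m * n)) ℝ) := by
  change IsAmicablePair (q : ℝ) ((n : ℝ) * (q : ℝ) ^ m * ((q : ℝ) + 1)) _ _
  induction m with
  | zero =>
    have h0 : IsAmicablePair (q : ℝ) ((n : ℝ) * (q : ℝ) ^ 0 * ((q : ℝ) + 1)) X Y :=
      ⟨hamic, by rw [pow_zero, mul_one]; exact hsum⟩
    exact h0.reindex _
  | succ m ih =>
    have hc : (n : ℝ) * (q : ℝ) ^ (m + 1) * ((q : ℝ) + 1) =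
        q * ((n : ℝ) * (q : ℝ) ^ m * ((q : ℝ) + 1)) := by ring
    rw [hc]
    exact (ih.step hQ).reindex (finPowMulEquiv q n m)
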